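/- arXiv:math/9905184 — 6 statements merged into one kernel-verified Lean document; each statement's English description precedes it below -/
import Mathlib

section
/- Let n = rd with r ≥ 2 and let ℂ^n = E_1 ⊕ ⋯ ⊕ E_r be a direct sum decomposition into d-dimensional subspaces. If V and V' are two d-dimensional subspaces of ℂ^n, each in general position with respect to (E_1,…,E_r), then there exists g ∈ GL_n(ℂ) with g(E_i) = E_i for all i = 1,…,r and g(V) = V'. -/
noncomputable section

open Module

/-- `V` is in general position with respect to the decomposition
`ℂⁿ = E 0 ⊕ ⋯ ⊕ E (r-1)`: for each `i`, the projection `πᵢ` onto `E i` (whose kernel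
is the sum of the other summands) restricts to a bijection from `V` onto `E i`. -/
def GenPos {n r : ℕ} (E : Fin r → Submodule ℂ (Fin n → ℂ))
    (V : Submodule ℂ (Fin n → ℂ)) : Prop :=
  ∀ i : Fin r, ∀ w ∈ E i, ∃! v, v ∈ V ∧ v - w ∈ ⨆ j, ⨆ (_ : j ≠ i), E j

theorem gp_equiv {n d r : ℕ} (E : Fin r → Submodule ℂ (Fin n → ℂ))
    (hdim : ∀ i, finrank ℂ (E i) = d)
    (e : (DirectSum (Fin r) fun i => E i) ≃ₗ[ℂ] (Fin n → ℂ))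
    (he : ∀ i (x : E i), e (DirectSum.lof ℂ (Fin r) (fun i => E i) i x) = x)
    (V : Submodule ℂ (Fin n → ℂ)) (hV : finrank ℂ V = d) (hgp : GenPos E V) (i : Fin r) :
    ∃ P : V ≃ₗ[ℂ] E i, ∀ v : V, P v = (e.symm v) i := by
  let L : (Fin n → ℂ) →ₗ[ℂ] E i := DirectSum.component ℂ (Fin r) (fun i => E i) i ∘ₗ e.symm.toLinearMap
  have hL : ∀ x, L x = (e.symm x) i := fun x => rfl
  have hes : ∀ j (x : E j), e.symm (x : Fin n → ℂ) = DirectSum.lof ℂ (Fin r) (fun i => E i) j x := by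
    intro j x
    rw [LinearEquiv.symm_apply_eq, he]
  have hker : (⨆ j, ⨆ (_ : j ≠ i), E j) ≤ LinearMap.ker L := by
    refine iSup_le fun j => iSup_le fun hj => fun x hx => ?_
    rw [LinearMap.mem_ker, hL, hes j ⟨x, hx⟩, DirectSum.lof_eq_of]
    exact DirectSum.of_eq_of_ne _ _ _ (Ne.symm hj)
  have hsurj : Function.Surjective (L.domRestrict V) := by
    intro w
    obtain ⟨v, ⟨hv, hvw⟩, -⟩ := hgp i w w.2
    refine ⟨⟨v, hv⟩, ?_⟩
    have h := hker hvw
    rw [LinearMap.mem_ker, map_sub, sub_eq_zero] at h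
    rw [LinearMap.domRestrict_apply, h, hL, hes i w, DirectSum.lof_eq_of]
    exact DirectSum.of_eq_same _ _
  have hinj : Function.Injective (L.domRestrict V) :=
    (LinearMap.injective_iff_surjective_of_finrank_eq_finrank (by rw [hV, hdim])).2 hsurj
  exact ⟨LinearEquiv.ofBijective _ ⟨hinj, hsurj⟩, fun v => rfl⟩

theorem stmt2 (n d r : ℕ) (hd : 0 < d) (hr : 2 ≤ r) (hn : n = r * d)
    (E : Fin r → Submodule ℂ (Fin n → ℂ))
    (hdim : ∀ i, finrank ℂ (E i) = d)
    (hdecomp : DirectSum.IsInternal E)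
    (V V' : Submodule ℂ (Fin n → ℂ))
    (hV : finrank ℂ V = d) (hV' : finrank ℂ V' = d)
    (hgp : GenPos E V) (hgp' : GenPos E V') :
    ∃ g : (Fin n → ℂ) ≃ₗ[ℂ] (Fin n → ℂ),
      (∀ i, (E i).map g.toLinearMap = E i) ∧ V.map g.toLinearMap = V' := by
  let e : (DirectSum (Fin r) fun i => E i) ≃ₗ[ℂ] (Fin n → ℂ) :=
    LinearEquiv.ofBijective (DirectSum.coeLinearMap E) hdecomp
  have he : ∀ i (x : E i), e (DirectSum.lof ℂ (Fin r) (fun i => E i) i x) = x :=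
    fun i x => DirectSum.coeLinearMap_lof E i x
  choose P hP using gp_equiv E hdim e he V hV hgp
  choose P' hP' using gp_equiv E hdim e he V' hV' hgp'
  let T : V ≃ₗ[ℂ] V' := LinearEquiv.ofFinrankEq V V' (by rw [hV, hV'])
  let h : ∀ i, E i ≃ₗ[ℂ] E i := fun i => (P i).symm.trans (T.trans (P' i))
  let H : (DirectSum (Fin r) fun i => E i) ≃ₗ[ℂ] (DirectSum (Fin r) fun i => E i) :=
    DFinsupp.mapRange.linearEquiv h
  have hH : ∀ x i, (H x) i = h i (x i) := fun x i => rfl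
  let g := e.symm.trans (H.trans e)
  have hgE : ∀ i (x : E i), g x = h i x := by
    intro i x
    have h1 : e.symm (x : Fin n → ℂ) = DirectSum.lof ℂ (Fin r) (fun i => E i) i x := by
      rw [LinearEquiv.symm_apply_eq, he]
    have h2 : H (DirectSum.lof ℂ (Fin r) (fun i => E i) i x) = DirectSum.lof ℂ (Fin r) (fun i => E i) i (h i x) :=
      DFinsupp.mapRange_single (hf := fun i => map_zero (h i))
    change e (H (e.symm x)) = _
    rw [h1, h2, he]
  have hgV : ∀ v : V, g v = T v := by
    intro v
    change e (H (e.symm v)) = _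
    rw [← LinearEquiv.eq_symm_apply]
    refine DFinsupp.ext fun i => ?_
    rw [hH, ← hP i v, ← hP' i (T v)]
    simp [h]
  refine ⟨g, fun i => ?_, ?_⟩
  · ext y
    constructor
    · rintro ⟨x, hx, rfl⟩
      have := hgE i ⟨x, hx⟩
      change g x ∈ E i
      rw [this]
      exact (h i ⟨x, hx⟩).2
    · intro hy
      refine ⟨(h i).symm ⟨y, hy⟩, Subtype.mem _, ?_⟩
      change g _ = y
      rw [hgE, LinearEquiv.apply_symm_apply]
  · ext y
    constructor
    · rintro ⟨x, hx, rfl⟩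
      have := hgV ⟨x, hx⟩
      change g x ∈ V'
      rw [this]
      exact (T ⟨x, hx⟩).2
    · intro hy
      refine ⟨T.symm ⟨y, hy⟩, Subtype.mem _, ?_⟩
      change g _ = y
      rw [hgV, LinearEquiv.apply_symm_apply]
end
end

section
/- Let n = (2r+1)e and d = 2e for positive integers r, e, and let E_1,…,E_r be independent d-dimensional subspaces of ℂ^n with F := E_1 ⊕ ⋯ ⊕ E_r. If V and V' are two d-dimensional subspaces of ℂ^n, each in general position with respect to (E_1,…,E_r), then there exists g ∈ GL_n(ℂ) with g(E_i) = E_i for all i = 1,…,r and g(V) = V'. -/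
noncomputable section

open Module

/-- The family `E` is independent: the natural sum map is injective,
i.e. `F = E 0 + ⋯ + E (r-1)` is a direct sum. -/
def IndepFam {n r : ℕ} (E : Fin r → Submodule ℂ (Fin n → ℂ)) : Prop :=
  Function.Injective fun f : (i : Fin r) → E i => ∑ i, (f i : Fin n → ℂ)

/-- General position of `V` with respect to independent subspaces `E 0, …, E (r-1)`
(case `n = (2r+1)e`, `d = 2e`): the intersection `W = V ⊓ F` with `F = ⨆ i, E i`
has dimension `e`, and for each `i` the projection of `F` onto `E i` (whose kernel
is `⨆ j ≠ i, E j`) restricts to an injective map on `W`. -/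
def GenPosHalf {n r : ℕ} (e : ℕ) (E : Fin r → Submodule ℂ (Fin n → ℂ))
    (V : Submodule ℂ (Fin n → ℂ)) : Prop :=
  finrank ℂ (V ⊓ (⨆ i, E i) : Submodule ℂ (Fin n → ℂ)) = e ∧
    ∀ i : Fin r, (V ⊓ (⨆ j, E j)) ⊓ (⨆ j, ⨆ (_ : j ≠ i), E j) = ⊥

theorem ext_aut_aux {W M : Type*} [AddCommGroup W] [Module ℂ W] [AddCommGroup M] [Module ℂ M]
    [FiniteDimensional ℂ M] (f g : W →ₗ[ℂ] M) (hf : Function.Injective f)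
    (hg : Function.Injective g) : ∃ a : M ≃ₗ[ℂ] M, ∀ w, a (f w) = g w := by
  obtain ⟨K, hK⟩ := Submodule.exists_isCompl (LinearMap.range f)
  obtain ⟨L, hL⟩ := Submodule.exists_isCompl (LinearMap.range g)
  have h1 := Submodule.finrank_add_eq_of_isCompl hK
  have h2 := Submodule.finrank_add_eq_of_isCompl hL
  have h3 := LinearMap.finrank_range_of_inj hf
  have h4 := LinearMap.finrank_range_of_inj hg
  have h5 : finrank ℂ K = finrank ℂ L := by omega
  let c : K ≃ₗ[ℂ] L := LinearEquiv.ofFinrankEq _ _ h5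
  let b : LinearMap.range f ≃ₗ[ℂ] LinearMap.range g :=
    (LinearEquiv.ofInjective f hf).symm.trans (LinearEquiv.ofInjective g hg)
  refine ⟨(Submodule.prodEquivOfIsCompl _ _ hK).symm.trans
    ((b.prodCongr c).trans (Submodule.prodEquivOfIsCompl _ _ hL)), fun w => ?_⟩
  have h6 : (Submodule.prodEquivOfIsCompl _ _ hK).symm (f w)
      = (LinearEquiv.ofInjective f hf w, 0) := by
    rw [LinearEquiv.symm_apply_eq]
    simp
  simp only [LinearEquiv.trans_apply, h6]
  simp [b]

/-- the sum map -/
def sumMapAux {n r : ℕ} (E : Fin r → Submodule ℂ (Fin n → ℂ)) :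
    ((i : Fin r) → E i) →ₗ[ℂ] (Fin n → ℂ) :=
  ∑ i, (E i).subtype ∘ₗ LinearMap.proj i

theorem sumMapAux_apply {n r : ℕ} (E : Fin r → Submodule ℂ (Fin n → ℂ)) (f : (i : Fin r) → E i) :
    sumMapAux E f = ∑ i, (f i : Fin n → ℂ) := by
  simp [sumMapAux]

theorem sumMapAux_single {n r : ℕ} (E : Fin r → Submodule ℂ (Fin n → ℂ)) (i : Fin r) (x : E i) :
    sumMapAux E (Pi.single i x) = x := by
  rw [sumMapAux_apply, Finset.sum_eq_single i]
  · simp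
  · intro j _ hj
    simp [Pi.single_eq_of_ne hj]
  · simp

theorem sumMapAux_range {n r : ℕ} (E : Fin r → Submodule ℂ (Fin n → ℂ)) :
    LinearMap.range (sumMapAux E) = ⨆ i, E i := by
  apply le_antisymm
  · rintro _ ⟨f, rfl⟩
    rw [sumMapAux_apply]
    exact Submodule.sum_mem _ fun i _ => Submodule.mem_iSup_of_mem i (f i).2
  · refine iSup_le fun i x hx => ⟨Pi.single i ⟨x, hx⟩, ?_⟩
    rw [sumMapAux_single]

theorem data_aux {n r e d : ℕ} (hn : n = (2 * r + 1) * e) (hd : d = 2 * e)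
    (E : Fin r → Submodule ℂ (Fin n → ℂ))
    (hdim : ∀ i, finrank ℂ (E i) = d)
    (hind : IndepFam E)
    (V : Submodule ℂ (Fin n → ℂ))
    (hV : finrank ℂ V = d) (hgp : GenPosHalf e E V) :
    ∃ (W C : Submodule ℂ (Fin n → ℂ)) (j : W →ₗ[ℂ] ((i : Fin r) → E i))
      (T : (((i : Fin r) → E i) × C) ≃ₗ[ℂ] (Fin n → ℂ)),
      finrank ℂ W = e ∧ finrank ℂ C = e ∧ W ⊔ C = V ∧ (∀ w, sumMapAux E (j w) = w) ∧
      (∀ f c, T (f, c) = sumMapAux E f + c) ∧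
      ∀ i, Function.Injective (LinearMap.proj i ∘ₗ j : W →ₗ[ℂ] E i) := by
  have hS : Function.Injective (sumMapAux E) := by
    have : (sumMapAux E : ((i : Fin r) → E i) → (Fin n → ℂ)) =
      fun f : (i : Fin r) → E i => ∑ i, (f i : Fin n → ℂ) := funext (sumMapAux_apply E)
    rw [this]; exact hind
  obtain ⟨h1, h2⟩ := hgp
  rw [← sumMapAux_range] at h1
  simp only [← sumMapAux_range (E := E)] at h2
  let j : (V ⊓ LinearMap.range (sumMapAux E) : Submodule ℂ (Fin n → ℂ)) →ₗ[ℂ] ((i : Fin r) → E i) :=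
    (LinearEquiv.ofInjective (sumMapAux E) hS).symm.toLinearMap ∘ₗ
      Submodule.inclusion inf_le_right
  have hj : ∀ w, sumMapAux E (j w) = w := by
    intro w
    have := (LinearEquiv.ofInjective (sumMapAux E) hS).apply_symm_apply
      (Submodule.inclusion inf_le_right w)
    exact congrArg Subtype.val this
  obtain ⟨K, hK⟩ := Submodule.exists_isCompl (V ⊓ LinearMap.range (sumMapAux E))
  have hsup : (V ⊓ LinearMap.range (sumMapAux E)) ⊔ (K ⊓ V) = V := by
    rw [← sup_inf_assoc_of_le _ inf_le_left, hK.sup_eq_top, top_inf_eq]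
  have hinf : (V ⊓ LinearMap.range (sumMapAux E)) ⊓ (K ⊓ V) = ⊥ := by
    rw [← inf_assoc, hK.inf_eq_bot, bot_inf_eq]
  have hC : finrank ℂ (K ⊓ V : Submodule ℂ (Fin n → ℂ)) = e := by
    have := Submodule.finrank_sup_add_finrank_inf_eq (V ⊓ LinearMap.range (sumMapAux E)) (K ⊓ V)
    rw [hsup, hinf, finrank_bot] at this
    omega
  let T0 : (((i : Fin r) → E i) × (K ⊓ V : Submodule ℂ (Fin n → ℂ))) →ₗ[ℂ] (Fin n → ℂ) :=
    (sumMapAux E).coprod (Submodule.subtype _)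
  have hT0 : Function.Injective T0 := by
    rw [← LinearMap.ker_eq_bot, LinearMap.ker_eq_bot']
    rintro ⟨f, c⟩ hfc
    have hfc' : sumMapAux E f + (c : Fin n → ℂ) = 0 := by simpa [T0] using hfc
    have hc : (c : Fin n → ℂ) = sumMapAux E (-f) := by
      rw [map_neg]; exact eq_neg_of_add_eq_zero_right hfc'
    have hc0 : (c : Fin n → ℂ) ∈
        (V ⊓ LinearMap.range (sumMapAux E)) ⊓ (K ⊓ V) :=
      ⟨⟨c.2.2, ⟨_, hc.symm⟩⟩, c.2⟩
    rw [hinf, Submodule.mem_bot] at hc0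
    rw [hc0, add_zero] at hfc'
    have hf : f = 0 := hS (by rw [hfc', map_zero])
    have hc1 : c = 0 := Subtype.ext hc0
    rw [hf, hc1]; rfl
  have hfr : finrank ℂ (((i : Fin r) → E i) × (K ⊓ V : Submodule ℂ (Fin n → ℂ)))
      = finrank ℂ (Fin n → ℂ) := by
    rw [Module.finrank_prod, Module.finrank_pi_fintype, hC]
    simp only [hdim, Module.finrank_fin_fun, hn, hd]
    simp
    ring
  refine ⟨_, K ⊓ V, j, LinearEquiv.ofInjectiveOfFinrankEq T0 hT0 hfr, h1, hC, hsup, hj, ?_, ?_⟩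
  · intro f c
    change T0 (f, c) = _
    simp [T0]
  · intro i
    rw [← LinearMap.ker_eq_bot, LinearMap.ker_eq_bot']
    intro w hw
    have hfi' : j w i = 0 := hw
    have hm : sumMapAux E (j w) ∈ (V ⊓ LinearMap.range (sumMapAux E)) ⊓ (⨆ j, ⨆ (_ : j ≠ i), E j) := by
      refine ⟨by rw [hj]; exact w.2, ?_⟩
      rw [sumMapAux_apply]
      refine Submodule.sum_mem _ fun k _ => ?_
      by_cases hk : k = i
      · subst hk; rw [hfi']; exact Submodule.zero_mem _
      · exact Submodule.mem_iSup_of_mem k (Submodule.mem_iSup_of_mem hk (j w k).2)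
    rw [h2 i, Submodule.mem_bot, hj] at hm
    exact Subtype.ext hm

theorem stmt7 (r e : ℕ) (hr : 0 < r) (he : 0 < e) (n d : ℕ)
    (hn : n = (2 * r + 1) * e) (hd : d = 2 * e)
    (E : Fin r → Submodule ℂ (Fin n → ℂ))
    (hdim : ∀ i, finrank ℂ (E i) = d)
    (hind : IndepFam E)
    (V V' : Submodule ℂ (Fin n → ℂ))
    (hV : finrank ℂ V = d) (hV' : finrank ℂ V' = d)
    (hgp : GenPosHalf e E V) (hgp' : GenPosHalf e E V') :
    ∃ g : (Fin n → ℂ) ≃ₗ[ℂ] (Fin n → ℂ),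
      (∀ i, (E i).map g.toLinearMap = E i) ∧ V.map g.toLinearMap = V' := by
  obtain ⟨W, C, j, T, hW, hC, hs, hj, hT, hp⟩ := data_aux hn hd E hdim hind V hV hgp
  obtain ⟨W', C', j', T', hW', hC', hs', hj', hT', hp'⟩ := data_aux hn hd E hdim hind V' hV' hgp'
  let φ : W ≃ₗ[ℂ] W' := LinearEquiv.ofFinrankEq _ _ (hW.trans hW'.symm)
  let c : C ≃ₗ[ℂ] C' := LinearEquiv.ofFinrankEq _ _ (hC.trans hC'.symm)
  have ha : ∀ i, ∃ a : E i ≃ₗ[ℂ] E i, ∀ w : W, a (j w i) = j' (φ w) i := fun i =>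
    ext_aut_aux (LinearMap.proj i ∘ₗ j : W →ₗ[ℂ] E i)
      ((LinearMap.proj i ∘ₗ j' : W' →ₗ[ℂ] E i) ∘ₗ φ.toLinearMap) (hp i)
      ((hp' i).comp φ.injective)
  choose a ha using ha
  let A : ((i : Fin r) → E i) ≃ₗ[ℂ] ((i : Fin r) → E i) := LinearEquiv.piCongrRight a
  let g := T.symm.trans ((A.prodCongr c).trans T')
  have hg : ∀ f x, g (sumMapAux E f + (x : C)) = sumMapAux E (A f) + c x := by
    intro f x
    rw [← hT]
    simp [g, hT']
  have hg0 : ∀ f, g (sumMapAux E f) = sumMapAux E (A f) := by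
    intro f
    simpa using hg f 0
  have hgc : ∀ x : C, g x = c x := by
    intro x
    simpa using hg 0 x
  refine ⟨g, fun i => ?_, ?_⟩
  · apply Submodule.eq_of_le_of_finrank_eq
    · rintro _ ⟨x, hx, rfl⟩
      have h1 : g x = a i ⟨x, hx⟩ := by
        have h2 := hg0 (Pi.single i ⟨x, hx⟩)
        have h3 : A (Pi.single i ⟨x, hx⟩) = Pi.single i (a i ⟨x, hx⟩) := by
          ext1 j
          by_cases hj : j = i
          · subst hj; simp [A]
          · simp [A, Pi.single_eq_of_ne hj]
        rw [h3, sumMapAux_single, sumMapAux_single] at h2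
        exact h2
      change g x ∈ E i
      rw [h1]
      exact (a i _).2
    · exact LinearEquiv.finrank_map_eq g _
  · apply Submodule.eq_of_le_of_finrank_eq
    · rw [← hs, Submodule.map_sup, ← hs']
      refine sup_le_sup ?_ ?_
      · rintro _ ⟨x, hx, rfl⟩
        have h1 : A (j ⟨x, hx⟩) = j' (φ ⟨x, hx⟩) := by
          ext1 i
          exact ha i ⟨x, hx⟩
        have h2 := hg0 (j ⟨x, hx⟩)
        rw [h1, hj, hj'] at h2
        change g x ∈ W'
        rw [h2]
        exact (φ _).2
      · rintro _ ⟨x, hx, rfl⟩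
        change g x ∈ C'
        rw [hgc ⟨x, hx⟩]
        exact (c _).2
    · exact (LinearEquiv.finrank_map_eq g _).trans (hV.trans hV'.symm)
end
end

section
/- Let e be a positive integer and let E_1, E_2, E_3 be 2e-dimensional subspaces of ℂ^{3e} with dim(E_i ∩ E_j) = e for all i < j and E_1 ∩ E_2 ∩ E_3 = {0}; set A := E_1 ∩ E_2, A_1 := E_1 ∩ E_3, A_2 := E_2 ∩ E_3. Let B_1, C_1 ⊆ E_1 and B_2, C_2 ⊆ E_2 be e-dimensional subspaces such that B_j ∩ A = B_j ∩ A_j = {0} and C_j ∩ A = C_j ∩ A_j = {0} for j = 1, 2. Then there exists g ∈ GL_{3e}(ℂ) with g(E_j) = E_j for j = 1, 2, 3, with g restricting to the identity on A, and with g(B_1) = C_1 and g(B_2) = C_2. -/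
noncomputable section

open Module

theorem graph_aux {V : Type*} [AddCommGroup V] [Module ℂ V] [FiniteDimensional ℂ V]
    (A B E F : Submodule ℂ V) (hA : A ≤ E) (hB : B ≤ E)
    (hBA : B ⊓ A = ⊥) (hBF : B ⊓ (E ⊓ F) = ⊥)
    (hd : finrank ℂ V ≤ finrank ℂ B + finrank ℂ F) :
    ∃ f : A →ₗ[ℂ] V, ∀ a : A, f a ∈ E ∧ f a ∈ F ∧ (a : V) + f a ∈ B ∧ (f a = 0 → a = 0) := by
  have hdis : Disjoint B F := by
    rw [disjoint_iff, ← hBF, ← inf_assoc, inf_eq_left.2 hB]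
  have hc : IsCompl B F := by
    refine ⟨hdis, codisjoint_iff.2 ?_⟩
    apply Submodule.eq_top_of_finrank_eq
    have h1 := Submodule.finrank_sup_add_finrank_inf_eq B F
    rw [disjoint_iff.1 hdis, finrank_bot] at h1
    have h2 := Submodule.finrank_le (B ⊔ F)
    omega
  have hp : ∀ x, B.projection F hc x ∈ B := fun x => Submodule.projection_apply_mem hc x
  have hq : ∀ x, B.projection F hc x - x ∈ F := fun x => by
    rw [← neg_sub]; exact F.neg_mem (Submodule.sub_projection_mem hc x)
  refine ⟨(B.projection F hc - LinearMap.id).comp A.subtype, fun a => ?_⟩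
  have hv : ((B.projection F hc - LinearMap.id).comp A.subtype) a = B.projection F hc (a : V) - a := rfl
  rw [hv]
  refine ⟨E.sub_mem (hB (hp _)) (hA a.2), hq _, ?_, fun h => ?_⟩
  · rw [add_sub_cancel]; exact hp _
  · have h3 : (a : V) ∈ B ⊓ A := ⟨by rw [← sub_eq_zero.1 h]; exact hp _, a.2⟩
    rw [hBA] at h3
    exact Subtype.ext (by simpa using h3)

theorem map_eq_aux {V : Type*} [AddCommGroup V] [Module ℂ V] [FiniteDimensional ℂ V]
    (g : V ≃ₗ[ℂ] V) (S T : Submodule ℂ V) (hd : finrank ℂ S = finrank ℂ T)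
    (h : ∀ x ∈ S, g x ∈ T) : S.map g.toLinearMap = T := by
  apply Submodule.eq_of_le_of_finrank_eq
  · rintro _ ⟨x, hx, rfl⟩
    exact h x hx
  · rw [← hd]; exact LinearEquiv.finrank_map_eq g S

theorem stmt12 (e : ℕ) (he : 0 < e) (E1 E2 E3 : Submodule ℂ (Fin (3 * e) → ℂ))
    (hd1 : finrank ℂ E1 = 2 * e) (hd2 : finrank ℂ E2 = 2 * e)
    (hd3 : finrank ℂ E3 = 2 * e)
    (h12 : finrank ℂ (E1 ⊓ E2 : Submodule ℂ (Fin (3 * e) → ℂ)) = e)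
    (h13 : finrank ℂ (E1 ⊓ E3 : Submodule ℂ (Fin (3 * e) → ℂ)) = e)
    (h23 : finrank ℂ (E2 ⊓ E3 : Submodule ℂ (Fin (3 * e) → ℂ)) = e)
    (h123 : E1 ⊓ E2 ⊓ E3 = ⊥)
    (B1 C1 B2 C2 : Submodule ℂ (Fin (3 * e) → ℂ))
    (hB1 : B1 ≤ E1) (hC1 : C1 ≤ E1) (hB2 : B2 ≤ E2) (hC2 : C2 ≤ E2)
    (hB1e : finrank ℂ B1 = e) (hC1e : finrank ℂ C1 = e)
    (hB2e : finrank ℂ B2 = e) (hC2e : finrank ℂ C2 = e)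
    (hB1A : B1 ⊓ (E1 ⊓ E2) = ⊥) (hB1A1 : B1 ⊓ (E1 ⊓ E3) = ⊥)
    (hB2A : B2 ⊓ (E1 ⊓ E2) = ⊥) (hB2A2 : B2 ⊓ (E2 ⊓ E3) = ⊥)
    (hC1A : C1 ⊓ (E1 ⊓ E2) = ⊥) (hC1A1 : C1 ⊓ (E1 ⊓ E3) = ⊥)
    (hC2A : C2 ⊓ (E1 ⊓ E2) = ⊥) (hC2A2 : C2 ⊓ (E2 ⊓ E3) = ⊥) :
    ∃ g : (Fin (3 * e) → ℂ) ≃ₗ[ℂ] (Fin (3 * e) → ℂ),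
      E1.map g.toLinearMap = E1 ∧ E2.map g.toLinearMap = E2 ∧
        E3.map g.toLinearMap = E3 ∧
        (∀ x ∈ E1 ⊓ E2, g x = x) ∧
        B1.map g.toLinearMap = C1 ∧ B2.map g.toLinearMap = C2 := by
  have hV : finrank ℂ (Fin (3 * e) → ℂ) = 3 * e := by simp
  have h0 : ∀ x, x ∈ E1 → x ∈ E2 → x ∈ E3 → x = 0 := fun x a b c => by
    have : x ∈ E1 ⊓ E2 ⊓ E3 := ⟨⟨a, b⟩, c⟩
    rw [h123] at this
    simpa using this
  obtain ⟨b1, hb1⟩ := graph_aux (E1 ⊓ E2) B1 E1 E3 inf_le_left hB1 hB1A hB1A1 (by omega)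
  obtain ⟨c1, hc1⟩ := graph_aux (E1 ⊓ E2) C1 E1 E3 inf_le_left hC1 hC1A hC1A1 (by omega)
  obtain ⟨b2, hb2⟩ := graph_aux (E1 ⊓ E2) B2 E2 E3 inf_le_right hB2 hB2A hB2A2 (by omega)
  obtain ⟨c2, hc2⟩ := graph_aux (E1 ⊓ E2) C2 E2 E3 inf_le_right hC2 hC2A hC2A2 (by omega)
  have key : ∀ f1 f2 : (E1 ⊓ E2 : Submodule ℂ (Fin (3 * e) → ℂ)) →ₗ[ℂ] (Fin (3 * e) → ℂ),
      (∀ a, f1 a ∈ E1 ∧ f1 a ∈ E3 ∧ (f1 a = 0 → a = 0)) →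
      (∀ a, f2 a ∈ E2 ∧ f2 a ∈ E3 ∧ (f2 a = 0 → a = 0)) →
      ∃ Φ : ((E1 ⊓ E2 : Submodule ℂ (Fin (3 * e) → ℂ)) ×
        (E1 ⊓ E2 : Submodule ℂ (Fin (3 * e) → ℂ)) ×
        (E1 ⊓ E2 : Submodule ℂ (Fin (3 * e) → ℂ))) ≃ₗ[ℂ] (Fin (3 * e) → ℂ),
        ∀ a b c, Φ (a, b, c) = (a : Fin (3 * e) → ℂ) + (f1 b + f2 c) := by
    intro f1 f2 hf1 hf2
    let L := (E1 ⊓ E2).subtype.coprod (f1.coprod f2)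
    have hL : ∀ a b c, L (a, b, c) = (a : Fin (3 * e) → ℂ) + (f1 b + f2 c) := by
      intro a b c; simp [L]
    have hinj : Function.Injective L := by
      rw [← LinearMap.ker_eq_bot, LinearMap.ker_eq_bot']
      rintro ⟨a, b, c⟩ h
      rw [hL] at h
      have ha : (a : Fin (3 * e) → ℂ) = 0 := by
        apply h0 _ a.2.1 a.2.2
        rw [eq_neg_of_add_eq_zero_left h]
        exact E3.neg_mem (E3.add_mem (hf1 b).2.1 (hf2 c).2.1)
      rw [ha, zero_add] at h
      have hb : f1 b = 0 := by
        refine h0 _ (hf1 b).1 ?_ (hf1 b).2.1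
        rw [eq_neg_of_add_eq_zero_left h]
        exact E2.neg_mem (hf2 c).1
      rw [hb, zero_add] at h
      rw [(hf1 b).2.2 hb, (hf2 c).2.2 h, show a = 0 from Subtype.ext ha]
      rfl
    refine ⟨LinearEquiv.ofInjectiveOfFinrankEq L hinj ?_, fun a b c => hL a b c⟩
    rw [Module.finrank_prod, Module.finrank_prod, h12, hV]; omega
  obtain ⟨Φ, hΦ⟩ := key b1 b2 (fun a => ⟨(hb1 a).1, (hb1 a).2.1, (hb1 a).2.2.2⟩)
    (fun a => ⟨(hb2 a).1, (hb2 a).2.1, (hb2 a).2.2.2⟩)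
  obtain ⟨Ψ, hΨ⟩ := key c1 c2 (fun a => ⟨(hc1 a).1, (hc1 a).2.1, (hc1 a).2.2.2⟩)
    (fun a => ⟨(hc2 a).1, (hc2 a).2.1, (hc2 a).2.2.2⟩)
  have hg : ∀ (a b c : (E1 ⊓ E2 : Submodule ℂ (Fin (3 * e) → ℂ))), (Φ.symm.trans Ψ) ((a : Fin (3 * e) → ℂ) + (b1 b + b2 c))
      = (a : Fin (3 * e) → ℂ) + (c1 b + c2 c) := by
    intro a b c
    rw [← hΦ, ← hΨ]; simp
  have hs : ∀ x, ∃ a b c : (E1 ⊓ E2 : Submodule ℂ (Fin (3 * e) → ℂ)), x = (a : Fin (3 * e) → ℂ) + (b1 b + b2 c) := by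
    intro x
    obtain ⟨⟨a, b, c⟩, h⟩ := Φ.surjective x
    exact ⟨a, b, c, by rw [← h, hΦ]⟩
  have z1 : ∀ (a b c : (E1 ⊓ E2 : Submodule ℂ (Fin (3 * e) → ℂ))), (a : Fin (3 * e) → ℂ) + (b1 b + b2 c) ∈ E1 → c = 0 := by
    intro a b c h
    refine (hb2 c).2.2.2 (h0 _ ?_ (hb2 c).1 (hb2 c).2.1)
    rwa [E1.add_mem_iff_right a.2.1, E1.add_mem_iff_right (hb1 b).1] at h
  have z2 : ∀ (a b c : (E1 ⊓ E2 : Submodule ℂ (Fin (3 * e) → ℂ))), (a : Fin (3 * e) → ℂ) + (b1 b + b2 c) ∈ E2 → b = 0 := by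
    intro a b c h
    refine (hb1 b).2.2.2 (h0 _ (hb1 b).1 ?_ (hb1 b).2.1)
    rwa [E2.add_mem_iff_right a.2.2, E2.add_mem_iff_left (hb2 c).1] at h
  refine ⟨Φ.symm.trans Ψ, map_eq_aux _ _ _ rfl ?_, map_eq_aux _ _ _ rfl ?_,
    map_eq_aux _ _ _ rfl ?_, ?_, map_eq_aux _ _ _ (by omega) ?_, map_eq_aux _ _ _ (by omega) ?_⟩
  · intro x hx
    obtain ⟨a, b, c, rfl⟩ := hs x
    rw [hg, z1 a b c hx, map_zero, add_zero]
    exact E1.add_mem a.2.1 (hc1 b).1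
  · intro x hx
    obtain ⟨a, b, c, rfl⟩ := hs x
    rw [hg, z2 a b c hx, map_zero, zero_add]
    exact E2.add_mem a.2.2 (hc2 c).1
  · intro x hx
    obtain ⟨a, b, c, rfl⟩ := hs x
    rw [hg]
    rw [E3.add_mem_iff_left (E3.add_mem (hb1 b).2.1 (hb2 c).2.1)] at hx
    exact E3.add_mem hx (E3.add_mem (hc1 b).2.1 (hc2 c).2.1)
  · intro x hx
    have := hg ⟨x, hx⟩ 0 0
    simpa only [map_zero, add_zero] using this
  · intro x hx
    obtain ⟨a, b, c, rfl⟩ := hs x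
    have hc := z1 a b c (hB1 hx)
    rw [hg]
    subst hc
    rw [map_zero, add_zero] at hx ⊢
    have h1 : b1 (b - a) ∈ B1 ⊓ (E1 ⊓ E3) := by
      refine ⟨?_, (hb1 _).1, (hb1 _).2.1⟩
      have := B1.sub_mem hx (hb1 a).2.2.1
      rwa [add_sub_add_left_eq_sub, ← map_sub] at this
    rw [hB1A1, Submodule.mem_bot] at h1
    rw [sub_eq_zero.1 ((hb1 _).2.2.2 h1)]
    exact (hc1 a).2.2.1
  · intro x hx
    obtain ⟨a, b, c, rfl⟩ := hs x
    have hb := z2 a b c (hB2 hx)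
    rw [hg]
    subst hb
    rw [map_zero, zero_add] at hx ⊢
    have h1 : b2 (c - a) ∈ B2 ⊓ (E2 ⊓ E3) := by
      refine ⟨?_, (hb2 _).1, (hb2 _).2.1⟩
      have := B2.sub_mem hx (hb2 a).2.2.1
      rwa [add_sub_add_left_eq_sub, ← map_sub] at this
    rw [hB2A2, Submodule.mem_bot] at h1
    rw [sub_eq_zero.1 ((hb2 _).2.2.2 h1)]
    exact (hc2 a).2.2.1
end
end

section
/- Let d, r, s be positive integers with s > r. For an rd×sd complex matrix M regarded as an r×s array of d×d blocks, write M = (A B) where A is the left rd×rd square submatrix and B the remaining rd×(s−r)d part, assume A is invertible, and set φ(M) := A^{-1}B with d×d blocks φ(M)_{ij} for i = 1,…,r and j = 1,…,s−r. For 2 ≤ i ≤ r and 2 ≤ j ≤ s−r define G_{ij}(M) := φ(M)_{11} · φ(M)_{i1}^{-1} · φ(M)_{ij} · φ(M)_{1j}^{-1}, whenever φ(M)_{i1} and φ(M)_{1j} are invertible. Then for every g ∈ GL_{rd}(ℂ) and every block-diagonal matrix H = diag(h_1,…,h_s) with h_k ∈ GL_d(ℂ), whenever both sides are defined one has G_{ij}(g·M·H)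 = h_1^{-1} · G_{ij}(M) · h_1. -/
noncomputable section

/-- The left `rd × rd` square part `A` of an `rd × sd` matrix `M = (A B)`
written in `d × d` blocks. -/
def Asq {d r s : ℕ} (hrs : r ≤ s) (M : Matrix (Fin r × Fin d) (Fin s × Fin d) ℂ) :
    Matrix (Fin r × Fin d) (Fin r × Fin d) ℂ :=
  Matrix.of fun p q => M p (Fin.castLE hrs q.1, q.2)

/-- The column index `r + j` (0-based) of the `j`-th block column of `B`. -/
def colIdx (r s : ℕ) (j : Fin (s - r)) : Fin s :=
  ⟨r + j, by have := j.isLt; omega⟩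

/-- The `d × d` block of `φ(M) = A⁻¹ B` in block row `i` and block column `j`
(both 0-based). -/
def Phiblk {d r s : ℕ} (hrs : r ≤ s) (M : Matrix (Fin r × Fin d) (Fin s × Fin d) ℂ)
    (i : Fin r) (j : Fin (s - r)) : Matrix (Fin d) (Fin d) ℂ :=
  Matrix.of fun a b => ((Asq hrs M)⁻¹ * M) (i, a) (colIdx r s j, b)

/-- `G_{ij}(M) = φ(M)₁₁ · φ(M)ᵢ₁⁻¹ · φ(M)ᵢⱼ · φ(M)₁ⱼ⁻¹` (0-based indices:
the paper's indices `2 ≤ i ≤ r`, `2 ≤ j ≤ s-r` correspond to `i ≠ 0`, `j ≠ 0`). -/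
def Gmap {d r s : ℕ} (hrs : r ≤ s) (hr : 0 < r) (hsr : 0 < s - r)
    (M : Matrix (Fin r × Fin d) (Fin s × Fin d) ℂ) (i : Fin r) (j : Fin (s - r)) :
    Matrix (Fin d) (Fin d) ℂ :=
  Phiblk hrs M ⟨0, hr⟩ ⟨0, hsr⟩ * (Phiblk hrs M i ⟨0, hsr⟩)⁻¹ *
    Phiblk hrs M i j * (Phiblk hrs M ⟨0, hr⟩ j)⁻¹

/-- The `sd × sd` block-diagonal matrix `diag (h 0, …, h (s-1))`. -/
def blockDiag {s d : ℕ} (h : Fin s → Matrix (Fin d) (Fin d) ℂ) :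
    Matrix (Fin s × Fin d) (Fin s × Fin d) ℂ :=
  Matrix.of fun p q => if p.1 = q.1 then h p.1 p.2 q.2 else 0

theorem mul_blockDiag_apply {m : Type*} {s d : ℕ} (N : Matrix m (Fin s × Fin d) ℂ)
    (h : Fin s → Matrix (Fin d) (Fin d) ℂ) (p : m) (q : Fin s × Fin d) :
    (N * blockDiag h) p q = ∑ c, N p (q.1, c) * h q.1 c q.2 := by
  rw [Matrix.mul_apply, Fintype.sum_prod_type, Finset.sum_eq_single q.1]
  · simp [blockDiag]
  · intro b _ hb
    simp [blockDiag, hb]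
  · simp

theorem blockDiag_mul_apply {m : Type*} {s d : ℕ} (N : Matrix (Fin s × Fin d) m ℂ)
    (h : Fin s → Matrix (Fin d) (Fin d) ℂ) (p : Fin s × Fin d) (q : m) :
    (blockDiag h * N) p q = ∑ c, h p.1 p.2 c * N (p.1, c) q := by
  rw [Matrix.mul_apply, Fintype.sum_prod_type, Finset.sum_eq_single p.1]
  · simp [blockDiag]
  · intro b _ hb
    simp [blockDiag, hb.symm]
  · simp

theorem blockDiag_inv {s d : ℕ} (h : Fin s → Matrix (Fin d) (Fin d) ℂ)
    (hh : ∀ t, IsUnit (h t)) : (blockDiag h)⁻¹ = blockDiag (fun t => (h t)⁻¹) := by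
  apply Matrix.inv_eq_right_inv
  ext ⟨p, a⟩ ⟨q, b⟩
  rw [blockDiag_mul_apply]
  by_cases hpq : p = q
  · subst hpq
    have h1 := congrFun (congrFun (Matrix.mul_nonsing_inv (h p)
      ((Matrix.isUnit_iff_isUnit_det _).1 (hh p))) a) b
    rw [Matrix.mul_apply] at h1
    simp only [blockDiag, Matrix.of_apply, if_true]
    rw [h1]
    simp [Matrix.one_apply]
  · simp [blockDiag, hpq, Matrix.one_apply]

theorem Asq_act {d r s : ℕ} (hrs : r ≤ s) (M : Matrix (Fin r × Fin d) (Fin s × Fin d) ℂ)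
    (g : Matrix (Fin r × Fin d) (Fin r × Fin d) ℂ) (h : Fin s → Matrix (Fin d) (Fin d) ℂ) :
    Asq hrs (g * M * blockDiag h) =
      g * Asq hrs M * blockDiag (fun t => h (Fin.castLE hrs t)) := by
  ext p q
  rw [mul_blockDiag_apply]
  simp only [Asq, Matrix.of_apply]
  rw [mul_blockDiag_apply]
  simp [Matrix.mul_apply]

theorem Phiblk_act {d r s : ℕ} (hrs : r ≤ s) (M : Matrix (Fin r × Fin d) (Fin s × Fin d) ℂ)
    (g : Matrix (Fin r × Fin d) (Fin r × Fin d) ℂ) (hg : IsUnit g)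
    (h : Fin s → Matrix (Fin d) (Fin d) ℂ) (hh : ∀ t, IsUnit (h t))
    (i : Fin r) (j : Fin (s - r)) :
    Phiblk hrs (g * M * blockDiag h) i j =
      (h (Fin.castLE hrs i))⁻¹ * (Phiblk hrs M i j * h (colIdx r s j)) := by
  have hgd := (Matrix.isUnit_iff_isUnit_det _).1 hg
  have key : (Asq hrs (g * M * blockDiag h))⁻¹ * (g * M * blockDiag h) =
      blockDiag (fun t => (h (Fin.castLE hrs t))⁻¹) * (((Asq hrs M)⁻¹ * M) * blockDiag h) := by
    rw [Asq_act, Matrix.mul_inv_rev, Matrix.mul_inv_rev, blockDiag_inv _ (fun t => hh _)]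
    simp only [Matrix.mul_assoc]
    rw [Matrix.nonsing_inv_mul_cancel_left _ _ hgd]
  ext a b
  simp only [Phiblk, Matrix.of_apply]
  rw [key, blockDiag_mul_apply, Matrix.mul_apply]
  refine Finset.sum_congr rfl fun c _ => ?_
  rw [mul_blockDiag_apply, Matrix.mul_apply]
  rfl

theorem stmt14 (d r s : ℕ) (hd : 0 < d) (hr : 0 < r) (hs : r < s)
    (M : Matrix (Fin r × Fin d) (Fin s × Fin d) ℂ)
    (i : Fin r) (j : Fin (s - r)) (hi : i ≠ ⟨0, hr⟩) (hj : j ≠ ⟨0, by omega⟩)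
    (hA : IsUnit (Asq hs.le M))
    (hi1 : IsUnit (Phiblk hs.le M i ⟨0, by omega⟩))
    (h1j : IsUnit (Phiblk hs.le M ⟨0, hr⟩ j))
    (g : Matrix (Fin r × Fin d) (Fin r × Fin d) ℂ) (hg : IsUnit g)
    (h : Fin s → Matrix (Fin d) (Fin d) ℂ) (hh : ∀ t, IsUnit (h t)) :
    Gmap hs.le hr (by omega) (g * M * blockDiag h) i j =
      (h ⟨0, by omega⟩)⁻¹ * Gmap hs.le hr (by omega) M i j * h ⟨0, by omega⟩ := by
  have hu : ∀ t, IsUnit (h t).det := fun t => (Matrix.isUnit_iff_isUnit_det _).1 (hh t)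
  have e0 : Fin.castLE hs.le ⟨0, hr⟩ = (⟨0, by omega⟩ : Fin s) := rfl
  unfold Gmap
  simp only [Phiblk_act hs.le M g hg h hh]
  simp only [Matrix.mul_inv_rev,
    Matrix.nonsing_inv_nonsing_inv _ (hu _), e0, Matrix.mul_assoc]
  rw [Matrix.mul_nonsing_inv_cancel_left _ _ (hu _), Matrix.mul_nonsing_inv_cancel_left _ _ (hu _),
    Matrix.mul_nonsing_inv_cancel_left _ _ (hu _)]
end
end

section
/- Let z_1, z_2, z_3, z_4 ∈ ℂ be pairwise distinct, and let M be the 2×4 complex matrix whose first row is (1,1,1,1) and whose second row is (z_1,z_2,z_3,z_4). With d = 1, r = 2, s = 4, and G_{22} defined by G_{22}(M) = φ(M)_{11} φ(M)_{21}^{-1} φ(M)_{22} φ(M)_{12}^{-1} where φ(M) = A^{-1}B for M = (A B) with A the left 2×2 part, one has G_{22}(M) = ((z_2−z_3)/(z_1−z_3)) · ((z_1−z_4)/(z_2−z_4)), i.e. G_{22}(M) is the classical cross-ratio of z_1, z_2, z_3, z_4. -/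
noncomputable section

/-- For `d = 1`, `r = 2`, `s = 4` and the matrix with rows `(1,1,1,1)` and
`(z₁,z₂,z₃,z₄)`, the invariant `G₂₂` is the classical cross-ratio. -/
theorem stmt16 (z : Fin 4 → ℂ) (hz : Function.Injective z)
    (M : Matrix (Fin 2 × Fin 1) (Fin 4 × Fin 1) ℂ)
    (hM0 : ∀ (j : Fin 4) (a b : Fin 1), M (0, a) (j, b) = 1)
    (hM1 : ∀ (j : Fin 4) (a b : Fin 1), M (1, a) (j, b) = z j) :
    Gmap (d := 1) (r := 2) (s := 4) (by omega) (by omega) (by omega) M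
        ⟨1, by omega⟩ ⟨1, by omega⟩ 0 0 =
      ((z 1 - z 2) / (z 0 - z 2)) * ((z 0 - z 3) / (z 1 - z 3)) := by
  have h01 : z 1 - z 0 ≠ 0 := sub_ne_zero.2 (hz.ne (by decide))
  have h02 : z 0 - z 2 ≠ 0 := sub_ne_zero.2 (hz.ne (by decide))
  have h13 : z 1 - z 3 ≠ 0 := sub_ne_zero.2 (hz.ne (by decide))
  have hle : 2 ≤ 4 := by omega
  have hinv : (Asq (d := 1) hle M)⁻¹ = Matrix.of fun p q =>
      (!![z 1, -1; -z 0, 1] p.1 q.1) / (z 1 - z 0) := by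
    apply Matrix.inv_eq_left_inv
    ext ⟨i, a⟩ ⟨j, b⟩
    have ha : a = 0 := Subsingleton.elim _ _
    have hb : b = 0 := Subsingleton.elim _ _
    subst ha hb
    have c0 : Fin.castLE hle 0 = 0 := rfl
    have c1 : Fin.castLE hle 1 = 1 := rfl
    fin_cases i <;> fin_cases j <;>
      simp [Matrix.mul_apply, Fintype.sum_prod_type, Asq, hM0, hM1, c0, c1, Matrix.one_apply] <;>
      field_simp <;> ring
  have hP0 : ∀ j : Fin (4 - 2), Phiblk (d := 1) hle M 0 j 0 0
      = (z 1 - z (colIdx 2 4 j)) / (z 1 - z 0) := by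
    intro j
    simp only [Phiblk, hinv, Matrix.of_apply, Matrix.mul_apply, Fintype.sum_prod_type]
    simp [hM0, hM1]
    ring
  have hP1 : ∀ j : Fin (4 - 2), Phiblk (d := 1) hle M 1 j 0 0
      = (z (colIdx 2 4 j) - z 0) / (z 1 - z 0) := by
    intro j
    simp only [Phiblk, hinv, Matrix.of_apply, Matrix.mul_apply, Fintype.sum_prod_type]
    simp [hM0, hM1]
    ring
  have hi : ∀ N : Matrix (Fin 1) (Fin 1) ℂ, N⁻¹ 0 0 = (N 0 0)⁻¹ := by
    intro N
    simp [Matrix.inv_def, Matrix.adjugate_fin_one]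
  have e0 : colIdx 2 4 ⟨0, by omega⟩ = 2 := rfl
  have e1 : colIdx 2 4 ⟨1, by omega⟩ = 3 := rfl
  have key : Gmap (d := 1) (r := 2) (s := 4) hle (by omega) (by omega) M
        ⟨1, by omega⟩ ⟨1, by omega⟩ 0 0 =
      Phiblk (d := 1) hle M 0 ⟨0, by omega⟩ 0 0 * (Phiblk (d := 1) hle M 1 ⟨0, by omega⟩ 0 0)⁻¹ *
      Phiblk (d := 1) hle M 1 ⟨1, by omega⟩ 0 0 *
      (Phiblk (d := 1) hle M 0 ⟨1, by omega⟩ 0 0)⁻¹ := by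
    rw [← hi, ← hi]
    simp only [Gmap, Matrix.mul_apply, Fin.sum_univ_one]
    rfl
  have h20 : z 2 - z 0 ≠ 0 := sub_ne_zero.2 (hz.ne (by decide))
  rw [key, hP0, hP0, hP1, hP1, e0, e1]
  field_simp
  ring
end
end

section
/- Let n = (2r+1)e and d = 2e for positive integers r, e. The group GL_n(ℂ) acts transitively on the set of (r+1)-tuples (V_1,…,V_{r+1}) of d-dimensional subspaces of ℂ^n such that V_1,…,V_r are independent and V_{r+1} is in general position with respect to (V_1,…,V_r): for any two such tuples (V_1,…,V_{r+1}) and (V'_1,…,V'_{r+1}) there exists g ∈ GL_n(ℂ) with g(V_i) = V'_i for all i = 1,…,r+1. -/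
noncomputable section

open Module

lemma ext_aux {A : Type*} [AddCommGroup A] [Module ℂ A] [FiniteDimensional ℂ A] (m k : ℕ)
    (f : (Fin m → ℂ) →ₗ[ℂ] A) (hf : Function.Injective f) (hA : finrank ℂ A = m + k) :
    ∃ h : ((Fin m → ℂ) × (Fin k → ℂ)) ≃ₗ[ℂ] A, ∀ x, h (x, 0) = f x := by
  obtain ⟨C, hC⟩ := Submodule.exists_isCompl (LinearMap.range f)
  have h1 := Submodule.finrank_add_eq_of_isCompl hC
  have h2 : finrank ℂ (LinearMap.range f) = m := by
    rw [LinearMap.finrank_range_of_inj hf]; simp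
  have h3 : finrank ℂ (Fin k → ℂ) = finrank ℂ C := by
    simp; omega
  let c := LinearEquiv.ofFinrankEq (Fin k → ℂ) C h3
  let φ := ((LinearEquiv.ofInjective f hf).prodCongr c).trans
    (Submodule.prodEquivOfIsCompl _ _ hC)
  refine ⟨φ, fun x => ?_⟩
  simp [φ]

lemma struct_aux (r e n : ℕ) (hn : n = (2 * r + 1) * e)
    (V : Fin r → Submodule ℂ (Fin n → ℂ)) (W : Submodule ℂ (Fin n → ℂ))
    (hV : ∀ i, finrank ℂ (V i) = 2 * e) (hW : finrank ℂ W = 2 * e)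
    (hind : IndepFam V) (hgp : GenPosHalf e V W) :
    ∃ (q : (Fin e → ℂ) →ₗ[ℂ] ((i : Fin r) → V i))
      (Φ : (((i : Fin r) → V i) × (Fin e → ℂ)) ≃ₗ[ℂ] (Fin n → ℂ)),
      (∀ i, Function.Injective ((LinearMap.proj i : _ →ₗ[ℂ] V i) ∘ₗ q)) ∧
      (∀ f, Φ (f, 0) = ∑ i, (f i : Fin n → ℂ)) ∧
      (∀ w ∈ W, ∃ x y, Φ (q x, y) = w) ∧ (∀ x y, Φ (q x, y) ∈ W) := by
  obtain ⟨hU, hp⟩ := hgp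
  let S : ((i : Fin r) → V i) →ₗ[ℂ] (Fin n → ℂ) :=
    ∑ i, (V i).subtype ∘ₗ LinearMap.proj i
  have hS : ∀ f, S f = ∑ i, (f i : Fin n → ℂ) := fun f => by simp [S]
  have hSinj : Function.Injective S := by
    intro f f' h
    apply hind
    simpa only [hS] using h
  have hSF : LinearMap.range S = ⨆ i, V i := by
    apply le_antisymm
    · rintro _ ⟨f, rfl⟩
      rw [hS]
      exact Submodule.sum_mem _ fun i _ => Submodule.mem_iSup_of_mem i (f i).2
    · refine iSup_le fun i v hv => ⟨Pi.single i ⟨v, hv⟩, ?_⟩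
      rw [hS, Finset.sum_eq_single i]
      · simp
      · intro j _ hj; simp [Pi.single_eq_of_ne hj]
      · simp
  let u := LinearEquiv.ofFinrankEq (Fin e → ℂ) (W ⊓ (⨆ i, V i) : Submodule ℂ (Fin n → ℂ))
    (by rw [hU]; simp)
  have hle : W ⊓ (⨆ i, V i) ≤ LinearMap.range S := by rw [hSF]; exact inf_le_right
  let q : (Fin e → ℂ) →ₗ[ℂ] ((i : Fin r) → V i) :=
    (LinearEquiv.ofInjective S hSinj).symm.toLinearMap ∘ₗ
      Submodule.inclusion hle ∘ₗ u.toLinearMap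
  have hq : ∀ x, S (q x) = (u x : Fin n → ℂ) := by
    intro x
    have : LinearEquiv.ofInjective S hSinj (q x) = Submodule.inclusion hle (u x) := by
      simp [q]
    simpa using congrArg Subtype.val this
  obtain ⟨h, hh⟩ := ext_aux e e
    ((Submodule.inclusion (inf_le_left : W ⊓ (⨆ i, V i) ≤ W)) ∘ₗ u.toLinearMap)
    ((Submodule.inclusion_injective (inf_le_left : W ⊓ (⨆ i, V i) ≤ W)).comp u.injective) (by omega)
  have hh' : ∀ x, (h (x, 0) : Fin n → ℂ) = u x := fun x => by rw [hh]; rfl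
  let Φ₀ : (((i : Fin r) → V i) × (Fin e → ℂ)) →ₗ[ℂ] (Fin n → ℂ) :=
    S.coprod (W.subtype ∘ₗ h.toLinearMap ∘ₗ LinearMap.inr ℂ _ _)
  have hΦ₀ : ∀ f y, Φ₀ (f, y) = S f + h (0, y) := fun f y => by simp [Φ₀]
  have hinj : Function.Injective Φ₀ := by
    rw [← LinearMap.ker_eq_bot, LinearMap.ker_eq_bot']
    rintro ⟨f, y⟩ h0
    rw [hΦ₀] at h0
    have hm : (h (0, y) : Fin n → ℂ) ∈ W ⊓ (⨆ i, V i) := by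
      refine ⟨(h (0, y)).2, ?_⟩
      rw [← hSF]
      exact ⟨-f, by rw [map_neg]; exact neg_eq_of_add_eq_zero_right h0⟩
    obtain ⟨x, hx⟩ := u.surjective ⟨_, hm⟩
    have hx' : h (x, 0) = h (0, y) := by
      apply Subtype.ext
      rw [hh', hx]
    have := h.injective hx'
    simp only [Prod.mk.injEq] at this
    obtain ⟨-, rfl⟩ := this
    have hz : h ((0 : Fin e → ℂ), (0 : Fin e → ℂ)) = 0 := h.map_zero
    rw [hz] at h0
    have : f = 0 := hSinj (by simpa using h0)
    simp [this]
  have hfr : finrank ℂ (((i : Fin r) → V i) × (Fin e → ℂ)) = finrank ℂ (Fin n → ℂ) := by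
    rw [Module.finrank_prod, Module.finrank_pi_fintype]
    simp [hV, hn]; ring
  let Φ := LinearEquiv.ofInjectiveOfFinrankEq Φ₀ hinj hfr
  have hΦ : ∀ f y, Φ (f, y) = S f + h (0, y) := fun f y => hΦ₀ f y
  have hz : h ((0 : Fin e → ℂ), (0 : Fin e → ℂ)) = 0 := h.map_zero
  have key : ∀ x y, Φ (q x, y) = h (x, y) := by
    intro x y
    rw [hΦ, hq, ← hh', ← Submodule.coe_add, ← map_add]
    simp
  refine ⟨q, Φ, fun i => ?_, fun f => ?_, fun w hw => ?_, fun x y => ?_⟩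
  · rw [← LinearMap.ker_eq_bot, LinearMap.ker_eq_bot']
    intro x hx
    have hx0 : q x i = 0 := hx
    have hm : (u x : Fin n → ℂ) ∈ (W ⊓ (⨆ j, V j)) ⊓ (⨆ j, ⨆ (_ : j ≠ i), V j) := by
      refine ⟨(u x).2, ?_⟩
      rw [← hq, hS]
      refine Submodule.sum_mem _ fun j _ => ?_
      by_cases hj : j = i
      · subst hj; rw [hx0]; exact Submodule.zero_mem _
      · exact Submodule.mem_iSup_of_mem j (Submodule.mem_iSup_of_mem hj (q x j).2)
    rw [hp i, Submodule.mem_bot] at hm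
    have : u x = 0 := Subtype.ext hm
    simpa using this
  · rw [hΦ, hz, hS]; simp
  · refine ⟨(h.symm ⟨w, hw⟩).1, (h.symm ⟨w, hw⟩).2, ?_⟩
    rw [key]; simp
  · rw [key]; exact (h _).2

/-- GL_n(ℂ) acts transitively on (r+1)-tuples consisting of r independent
d-dimensional subspaces together with one more d-dimensional subspace in
general position (n = (2r+1)e, d = 2e). -/
theorem stmt19 (r e : ℕ) (hr : 0 < r) (he : 0 < e) (n d : ℕ)
    (hn : n = (2 * r + 1) * e) (hd : d = 2 * e)
    (V V' : Fin r → Submodule ℂ (Fin n → ℂ))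
    (W W' : Submodule ℂ (Fin n → ℂ))
    (hV : ∀ i, finrank ℂ (V i) = d) (hV' : ∀ i, finrank ℂ (V' i) = d)
    (hW : finrank ℂ W = d) (hW' : finrank ℂ W' = d)
    (hind : IndepFam V) (hind' : IndepFam V')
    (hgp : GenPosHalf e V W) (hgp' : GenPosHalf e V' W') :
    ∃ g : (Fin n → ℂ) ≃ₗ[ℂ] (Fin n → ℂ),
      (∀ i, (V i).map g.toLinearMap = V' i) ∧ W.map g.toLinearMap = W' := by
  subst hd
  obtain ⟨q, Φ, hq, hΦ, hs, hm⟩ := struct_aux r e n hn V W hV hW hind hgp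
  obtain ⟨q', Φ', hq', hΦ', hs', hm'⟩ := struct_aux r e n hn V' W' hV' hW' hind' hgp'
  have hg : ∀ i, ∃ g : V i ≃ₗ[ℂ] V' i, ∀ x, g (q x i) = q' x i := by
    intro i
    obtain ⟨a, ha⟩ := ext_aux e e _ (hq i) (by rw [hV]; ring)
    obtain ⟨b, hb⟩ := ext_aux e e _ (hq' i) (by rw [hV']; ring)
    refine ⟨a.symm.trans b, fun x => ?_⟩
    have h1 : q x i = a (x, 0) := (ha x).symm
    have h2 : q' x i = b (x, 0) := (hb x).symm
    rw [h1, h2]; simp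
  choose g hg using hg
  let G := (Φ.symm.trans ((LinearEquiv.piCongrRight g).prodCongr
    (LinearEquiv.refl ℂ (Fin e → ℂ)))).trans Φ'
  have hG : ∀ f y, G (Φ (f, y)) = Φ' (fun i => g i (f i), y) := by
    intro f y
    simp [G]
    rfl
  refine ⟨G, fun i => ?_, ?_⟩
  · apply Submodule.eq_of_le_of_finrank_eq
    · rintro _ ⟨v, hv, rfl⟩
      have h1 : v = Φ (Pi.single i ⟨v, hv⟩, 0) := by
        rw [hΦ, Finset.sum_eq_single i]
        · simp
        · intro j _ hj; simp [Pi.single_eq_of_ne hj]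
        · simp
      show G v ∈ V' i
      rw [h1, hG, hΦ']
      refine Submodule.sum_mem _ fun j _ => ?_
      by_cases hj : j = i
      · subst hj; exact Subtype.prop _
      · simp [Pi.single_eq_of_ne hj]
    · rw [hV']
      exact (LinearEquiv.finrank_map_eq G (V i)).trans (hV i)
  · apply Submodule.eq_of_le_of_finrank_eq
    · rintro _ ⟨w, hw, rfl⟩
      obtain ⟨x, y, rfl⟩ := hs w hw
      show G _ ∈ W'
      rw [hG]
      simp only [hg]
      exact hm' x y
    · rw [hW']
      exact (LinearEquiv.finrank_map_eq G W).trans hW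
end
end
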